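/- Let n ≥ 1, for i, j ∈ {1, 2, 3} let H^{[ij]} be invertible diagonal 2n×2n complex matrices, let V^{[1]}, V^{[2]}, V^{[3]} be 2n×n complex matrices, and let i ∈ {1, …, n}. Suppose the strong interference alignment conditions hold: span(H^{[12]} V^{[2]}) = span(H^{[13]} V^{[3]}), span(H^{[23]} V^{[3]}_{i'}) ⊆ span(H^{[21]} V^{[1]}), and span(H^{[31]} V^{[1]}) = span(H^{[32]} V^{[2]}). Then span(V^{[3]}_{i'}) ⊆ span(T⁻¹ V^{[3]}), where T = (H^{[13]})⁻¹ H^{[23]} (H^{[21]})⁻¹ H^{[12]} (H^{[32]})⁻¹ H^{[31]}; i.e., the column span of V^{[3]} with column i removed must lie inside the T⁻¹-image of the column span of V^{[3]}. -/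

import Mathlib

/-!
Left multiplication by a matrix `A` maps the column span of `M` onto that of `A * M`
(`colSpan_mul`, `colSpanDel_mul`), so an inclusion of column spans may be multiplied on the left,
and chaining the three alignment conditions gives
`span(V3 with column i deleted) ⊆ span(D V3)` with
`D = H₂₃⁻¹ H₂₁ H₃₁⁻¹ H₃₂ H₁₂⁻¹ H₁₃`. Diagonal matrices commute, hence `D = T⁻¹`
(`channel_inv_eq`).
-/

/-- The column space of a complex matrix: the `ℂ`-linear span of its columns. -/
noncomputable def colSpan {m n : ℕ} (M : Matrix (Fin m) (Fin n) ℂ) :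
    Submodule ℂ (Fin m → ℂ) :=
  Submodule.span ℂ (Set.range fun j : Fin n => fun i : Fin m => M i j)

/-- The span of the columns of `M` with the `i`-th column deleted. -/
noncomputable def colSpanDel {m n : ℕ} (M : Matrix (Fin m) (Fin n) ℂ) (i : Fin n) :
    Submodule ℂ (Fin m → ℂ) :=
  Submodule.span ℂ ((fun j : Fin n => fun k : Fin m => M k j) '' {i}ᶜ)

theorem colSpan_mul {m n : ℕ} (A : Matrix (Fin m) (Fin m) ℂ) (M : Matrix (Fin m) (Fin n) ℂ) :
    colSpan (A * M) = (colSpan M).map A.mulVecLin := by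
  unfold colSpan
  rw [Submodule.map_span, ← Set.range_comp]
  rfl

theorem colSpanDel_mul {m n : ℕ} (A : Matrix (Fin m) (Fin m) ℂ) (M : Matrix (Fin m) (Fin n) ℂ)
    (i : Fin n) : colSpanDel (A * M) i = (colSpanDel M i).map A.mulVecLin := by
  unfold colSpanDel
  rw [Submodule.map_span, ← Set.image_comp]
  rfl

/-- Cancelling an invertible left factor from an equality of column spans. -/
theorem colSpan_eq_of_mul_eq {m n : ℕ} {A B : Matrix (Fin m) (Fin m) ℂ}
    {M N : Matrix (Fin m) (Fin n) ℂ} (hA : IsUnit A.det)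
    (h : colSpan (A * M) = colSpan (B * N)) : colSpan M = colSpan (A⁻¹ * B * N) := by
  rw [Matrix.mul_assoc, colSpan_mul A⁻¹, ← h, ← colSpan_mul,
    Matrix.nonsing_inv_mul_cancel_left _ _ hA]

theorem exists_diagonal_of_isUnit_det {m : ℕ} {A : Matrix (Fin m) (Fin m) ℂ} (hA : A.IsDiag)
    (hu : IsUnit A.det) :
    ∃ d : Fin m → ℂ, (∀ k, d k ≠ 0) ∧ A = Matrix.diagonal d ∧
      A⁻¹ = Matrix.diagonal fun k => (d k)⁻¹ := by
  have hd : A = Matrix.diagonal A.diag := hA.diagonal_diag.symm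
  have h0 : ∀ k, A.diag k ≠ 0 := by
    rw [hd, Matrix.det_diagonal, isUnit_iff_ne_zero, Finset.prod_ne_zero_iff] at hu
    exact fun k => hu k (Finset.mem_univ k)
  refine ⟨A.diag, h0, hd, Matrix.inv_eq_right_inv ?_⟩
  conv_lhs => rw [hd]
  rw [Matrix.diagonal_mul_diagonal, ← Matrix.diagonal_one]
  congr 1
  funext k
  rw [Matrix.diag_diagonal]
  exact mul_inv_cancel₀ (h0 k)

/-- The inverse of the alignment matrix `T`, with its factors in the order in which they arise
from chaining the alignment conditions. -/
theorem channel_inv_eq {m : ℕ} (H : Fin 3 → Fin 3 → Matrix (Fin m) (Fin m) ℂ)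
    (hdiag : ∀ i j, (H i j).IsDiag) (hinv : ∀ i j, IsUnit (H i j).det) :
    ((H 0 2)⁻¹ * H 1 2 * (H 1 0)⁻¹ * H 0 1 * (H 2 1)⁻¹ * H 2 0)⁻¹ =
      (H 1 2)⁻¹ * H 1 0 * ((H 2 0)⁻¹ * H 2 1) * ((H 0 1)⁻¹ * H 0 2) := by
  choose d hd hH hHinv using fun i j => exists_diagonal_of_isUnit_det (hdiag i j) (hinv i j)
  apply Matrix.inv_eq_right_inv
  simp only [hHinv]
  simp only [hH, Matrix.diagonal_mul_diagonal]
  rw [← Matrix.diagonal_one]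
  congr 1
  funext k
  have h01 := hd 0 1 k
  have h02 := hd 0 2 k
  have h10 := hd 1 0 k
  have h12 := hd 1 2 k
  have h20 := hd 2 0 k
  have h21 := hd 2 1 k
  field_simp

/-- With invertible diagonal `2n × 2n` channel matrices `H i j`
(receiver `i`, transmitter `j`, 0-indexed) and beamforming matrices satisfying
the strong interference alignment conditions
`span(H^{[12]} V^{[2]}) = span(H^{[13]} V^{[3]})`,
`span(H^{[23]} V^{[3]}_{i'}) ⊆ span(H^{[21]} V^{[1]})`,
`span(H^{[31]} V^{[1]}) = span(H^{[32]} V^{[2]})`,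
the column span of `V^{[3]}` with column `i` removed lies inside
`span(T⁻¹ V^{[3]})`, where
`T = (H^{[13]})⁻¹ H^{[23]} (H^{[21]})⁻¹ H^{[12]} (H^{[32]})⁻¹ H^{[31]}`. -/
theorem strong_ia_gives_siac (n : ℕ) (hn : 1 ≤ n)
    (H : Fin 3 → Fin 3 → Matrix (Fin (2 * n)) (Fin (2 * n)) ℂ)
    (hdiag : ∀ i j, (H i j).IsDiag) (hinv : ∀ i j, IsUnit (H i j).det)
    (V1 V2 V3 : Matrix (Fin (2 * n)) (Fin n) ℂ) (i : Fin n)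
    (hSIA1 : colSpan (H 0 1 * V2) = colSpan (H 0 2 * V3))
    (hSIA2 : colSpanDel (H 1 2 * V3) i ≤ colSpan (H 1 0 * V1))
    (hSIA3 : colSpan (H 2 0 * V1) = colSpan (H 2 1 * V2)) :
    colSpanDel V3 i ≤
      colSpan (((H 0 2)⁻¹ * H 1 2 * (H 1 0)⁻¹ * H 0 1 * (H 2 1)⁻¹ * H 2 0)⁻¹ * V3) := by
  rw [channel_inv_eq H hdiag hinv, Matrix.mul_assoc, colSpan_mul,
    ← colSpan_eq_of_mul_eq (hinv 0 1) hSIA1, ← colSpan_mul, Matrix.mul_assoc, colSpan_mul,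
    ← colSpan_eq_of_mul_eq (hinv 2 0) hSIA3, ← colSpan_mul, Matrix.mul_assoc, colSpan_mul]
  have h := Submodule.map_mono (f := (H 1 2)⁻¹.mulVecLin) hSIA2
  rwa [← colSpanDel_mul, Matrix.nonsing_inv_mul_cancel_left _ _ (hinv 1 2)] at h
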